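/- Let ℓ ≥ 2 and p ≥ ℓ be integers, and let α ∈ ℝ satisfy 0 < α < 1/2 − 1/(2·(2^ℓ − 1)). Then 1 − 1/(2^p − 1) ∈ C_α. (This holds because the smallest representative in (0, 1] of any point 2^k·(1 − 1/(2^p − 1)) mod ℤ, k ≥ 0, equals 1/2 − 1/(2(2^p − 1)), which is at least 1/2 − 1/(2(2^ℓ − 1)) > α.) -/

import Mathlib

/-- `C_α`: the set of `t ∈ (0, 1]` with `2^k t ∈ [α, 1] (mod ℤ)` for all `k ≥ 0`. -/
def CSet (α : ℝ) : Set ℝ :=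
  {t : ℝ | 0 < t ∧ t ≤ 1 ∧ ∀ k : ℕ, ∃ n : ℤ, α ≤ 2 ^ k * t - n ∧ 2 ^ k * t - n ≤ 1}

/-! The expansion of `1 / (2 ^ p - 1)` in base two has period `p`, so its orbit under doubling
modulo `ℤ` consists of the points `2 ^ j / (2 ^ p - 1)` with `j < p`. The largest of these is
`2 ^ (p - 1) / (2 ^ p - 1) = 1 / 2 + 1 / (2 * (2 ^ p - 1))`, and the reflection `t ↦ 1 - t`,
which commutes with doubling modulo `ℤ`, turns this upper bound into a lower bound for the orbit
of `1 - 1 / (2 ^ p - 1)`. -/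

theorem antitone_CSet : Antitone CSet := fun _ _ hαβ _ ⟨ht0, ht1, horbit⟩ ↦
  ⟨ht0, ht1, fun k ↦ (horbit k).imp fun _ ↦ And.imp_left hαβ.trans⟩

theorem pow_sub_one_dvd_pow_sub_pow_mod {R : Type*} [Ring R] (x : R) (p k : ℕ) :
    x ^ p - 1 ∣ x ^ k - x ^ (k % p) := by
  have hfactor : x ^ k - x ^ (k % p) = (x ^ (p * (k / p)) - 1) * x ^ (k % p) := by
    rw [sub_one_mul, ← pow_add, Nat.div_add_mod]
  rw [hfactor]
  exact (pow_one_sub_dvd_pow_mul_sub_one x p (k / p)).mul_right _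

theorem exists_int_pow_div_pow_sub_one_eq_add {K : Type*} [Field K] (b : ℤ) {p : ℕ}
    (hb : (b : K) ^ p ≠ 1) (k : ℕ) :
    ∃ m : ℤ, (b : K) ^ k / (b ^ p - 1) = m + b ^ (k % p) / (b ^ p - 1) := by
  obtain ⟨m, hm⟩ := pow_sub_one_dvd_pow_sub_pow_mod b p k
  have hcast : (b : K) ^ k - b ^ (k % p) = (b ^ p - 1) * m :=
    mod_cast congrArg (Int.cast (R := K)) hm
  refine ⟨m, ?_⟩
  rw [← sub_eq_iff_eq_add, ← sub_div, hcast, mul_div_cancel_left₀ _ (sub_ne_zero.mpr hb)]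

theorem pow_div_pow_sub_one_le {K : Type*} [Field K] [LinearOrder K] [IsStrictOrderedRing K]
    {b : K} (hb : 1 < b) {j p : ℕ} (hj : j < p) :
    b ^ j / (b ^ p - 1) ≤ (1 + 1 / (b ^ p - 1)) / b := by
  have hb0 : 0 < b := zero_lt_one.trans hb
  have hD : 0 < b ^ p - 1 := sub_pos.mpr (one_lt_pow₀ hb (by lia))
  have hpow : b ^ j * b ≤ b ^ p := by
    rw [← pow_succ]
    exact pow_le_pow_right₀ hb.le hj
  calc b ^ j / (b ^ p - 1) ≤ b ^ p / b / (b ^ p - 1) := by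
        gcongr
        exact (le_div_iff₀ hb0).mpr hpow
    _ = (1 + 1 / (b ^ p - 1)) / b := by
        field_simp [hD.ne']
        ring

theorem one_sub_inv_mem_CSet_half_sub_inv {p : ℕ} (hp : 2 ≤ p) :
    (1 - 1 / (2 ^ p - 1) : ℝ) ∈ CSet (1 / 2 - 1 / (2 * (2 ^ p - 1))) := by
  have hpow : (2 : ℝ) ^ 2 ≤ 2 ^ p := pow_le_pow_right₀ one_le_two hp
  have hD : (1 : ℝ) < 2 ^ p - 1 := by linarith
  refine ⟨sub_pos.mpr ((div_lt_one (by positivity)).mpr hD), sub_le_self _ (by positivity),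
    fun k ↦ ?_⟩
  obtain ⟨m, hm⟩ : ∃ m : ℤ, (2 : ℝ) ^ k / (2 ^ p - 1) = m + 2 ^ (k % p) / (2 ^ p - 1) :=
    mod_cast exists_int_pow_div_pow_sub_one_eq_add (K := ℝ) 2 (by push_cast; linarith) k
  have horbit : (2 : ℝ) ^ k * (1 - 1 / (2 ^ p - 1)) - (2 ^ k - 1 - m : ℤ) =
      1 - 2 ^ (k % p) / (2 ^ p - 1) := by
    push_cast
    linear_combination -hm
  refine ⟨2 ^ k - 1 - m, ?_⟩
  rw [horbit]
  constructor
  · have hle : (2 : ℝ) ^ (k % p) / (2 ^ p - 1) ≤ (1 + 1 / (2 ^ p - 1)) / 2 :=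
      pow_div_pow_sub_one_le one_lt_two (Nat.mod_lt k (by lia))
    calc (1 / 2 - 1 / (2 * (2 ^ p - 1)) : ℝ) = 1 - (1 + 1 / (2 ^ p - 1)) / 2 := by
          rw [← div_div]
          ring
      _ ≤ 1 - 2 ^ (k % p) / (2 ^ p - 1) := sub_le_sub_left hle 1
  · exact sub_le_self _ (by positivity)

/-- For integers `ℓ ≥ 2`, `p ≥ ℓ`, and `0 < α < 1/2 - 1/(2(2^ℓ - 1))`, the angle
`1 - 1/(2^p - 1)` belongs to `C_α`. -/
theorem one_sub_inv_mem_CSet (l p : ℕ) (hl : 2 ≤ l) (hp : l ≤ p) (α : ℝ)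
    (hα0 : 0 < α) (hα : α < 1/2 - 1 / (2 * (2 ^ l - 1))) :
    (1 - 1 / (2 ^ p - 1) : ℝ) ∈ CSet α := by
  have hD : (0 : ℝ) < 2 ^ l - 1 := sub_pos.mpr (one_lt_pow₀ one_lt_two (by lia))
  have hα_le : α ≤ 1 / 2 - 1 / (2 * (2 ^ p - 1)) := calc
    α ≤ 1 / 2 - 1 / (2 * (2 ^ l - 1)) := hα.le
    _ ≤ 1 / 2 - 1 / (2 * (2 ^ p - 1)) := by
      gcongr
      exact one_le_two
  exact antitone_CSet hα_le (one_sub_inv_mem_CSet_half_sub_inv (hl.trans hp))
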